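/- arXiv:2206.12868 — 5 statements merged into one kernel-verified Lean document; each statement's English description precedes it below -/
import Mathlib

section
/- Let (x₁, x₂) be a bivariate signal of length N, M a positive integer, and let (x'₁, x'₂) be its conjugate reflection, x'ᵢ[n] = conj(xᵢ[N−1−n]) for 0 ≤ n ≤ N−1. Then the spectral matrices of (x'₁, x'₂) and (x₁, x₂) coincide at every frequency index m < M if and only if Im(X̂₁[m]·conj(X̂₂[m])) = 0 for every m < M, i.e., if and only if the two Fourier components of (x₁, x₂) are in phase at every measured frequency. -/
open Matrix

/-- Discrete Fourier transform of a signal `x : Fin N → ℂ` at frequency index `m`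
(with `M` frequencies): `X̂[m] = ∑ₙ x[n]·exp(−2πi·m·n/M)`. -/
noncomputable def dft (N M : ℕ) (x : Fin N → ℂ) (m : ℕ) : ℂ :=
  ∑ n : Fin N, x n * Complex.exp (-(2 * Real.pi * Complex.I) * (m : ℂ) * ((n : ℕ) : ℂ) / (M : ℂ))

/-- The spectral matrix of a bivariate signal at frequency index `m`:
`𝔉[m]_{ij} = X̂ᵢ[m]·conj(X̂ⱼ[m])`. -/
noncomputable def specMat (N M : ℕ) (x : Fin 2 → Fin N → ℂ) (m : ℕ) :
    Matrix (Fin 2) (Fin 2) ℂ :=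
  Matrix.of fun i j => dft N M (x i) m * (starRingEnd ℂ) (dft N M (x j) m)

/-!
Reflection `n ↦ N - 1 - n` conjugates the Fourier kernel up to a phase that does not depend on `n`,
so conjugate reflection replaces `X̂[m]` by `conj X̂[m]` times a unit complex number common to both
channels. That phase cancels in the spectral matrix, which is therefore replaced by its entrywise
conjugate. A Hermitian matrix equals its conjugate exactly when its entries above the diagonal are
real, and a `2 × 2` matrix has only one of them.
-/

open scoped ComplexConjugate FourierTransform

/-- The conjugate reflection `n ↦ conj (x (N - 1 - n))` of a signal of length `N`; the index
`N - 1 - n` is encoded as `n.rev`. -/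
noncomputable def conjReflect {N : ℕ} (x : Fin N → ℂ) : Fin N → ℂ :=
  fun n => conj (x n.rev)

theorem map_conj_eq_self_iff_of_isHermitian {ι 𝕜 : Type*} [LinearOrder ι] [RCLike 𝕜]
    {A : Matrix ι ι 𝕜} (hA : A.IsHermitian) :
    A.map conj = A ↔ ∀ i j, i < j → RCLike.im (A i j) = 0 := by
  simp only [← Matrix.ext_iff, map_apply, ← RCLike.conj_eq_iff_im]
  refine ⟨fun h i j _ => h i j, fun h i j => ?_⟩
  have hconj (k l : ι) : conj (A k l) = A l k := hA.apply l k
  rcases lt_trichotomy i j with hij | rfl | hji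
  · exact h i j hij
  · exact hconj i i
  · exact (hconj i j).trans ((h j i hji).symm.trans (hconj j i))

theorem fourierChar_mul_rev {N : ℕ} (t : ℝ) (n : Fin N) :
    (𝐞 (t * (n.rev : ℕ)) : ℂ) = 𝐞 (t * (N - 1)) * conj (𝐞 (t * (n : ℕ)) : ℂ) := by
  have rev_cast : ((n.rev : ℕ) : ℝ) = N - 1 - (n : ℕ) := by
    rw [Fin.val_rev, Nat.cast_sub n.isLt]
    push_cast
    ring
  rw [rev_cast, mul_sub t (N - 1 : ℝ), AddChar.map_sub_eq_div, div_eq_mul_inv, Circle.coe_mul,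
    Circle.coe_inv_eq_conj]

section DFT

variable {N : ℕ} (M : ℕ) (x : Fin N → ℂ) (m : ℕ)

theorem dft_eq_sum_fourierChar :
    dft N M x m = ∑ n : Fin N, x n * (𝐞 (-(m / M) * (n : ℕ)) : ℂ) := by
  refine Finset.sum_congr rfl fun n _ => ?_
  rw [Real.fourierChar_apply]
  push_cast
  ring_nf

theorem dft_conjReflect :
    dft N M (conjReflect x) m = 𝐞 (-(m / M) * (N - 1)) * conj (dft N M x m) :=
  calc dft N M (conjReflect x) m
    _ = ∑ n : Fin N, conjReflect x n.rev * (𝐞 (-(m / M) * (n.rev : ℕ)) : ℂ) := by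
      rw [dft_eq_sum_fourierChar]
      exact (Equiv.sum_comp Fin.revPerm _).symm
    _ = ∑ n : Fin N, 𝐞 (-(m / M) * (N - 1)) * conj (x n * (𝐞 (-(m / M) * (n : ℕ)) : ℂ)) := by
      refine Finset.sum_congr rfl fun n _ => ?_
      rw [conjReflect, Fin.rev_rev, fourierChar_mul_rev, map_mul conj, mul_left_comm]
    _ = 𝐞 (-(m / M) * (N - 1)) * conj (dft N M x m) := by
      rw [dft_eq_sum_fourierChar, map_sum, Finset.mul_sum]

end DFT

section SpectralMatrix

variable {N : ℕ} (M : ℕ) (x : Fin 2 → Fin N → ℂ) (m : ℕ)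

theorem isHermitian_specMat : (specMat N M x m).IsHermitian :=
  Matrix.IsHermitian.ext fun _ _ => star_mul_star _ _

theorem specMat_conjReflect :
    specMat N M (fun i => conjReflect (x i)) m = (specMat N M x m).map conj := by
  ext i j
  have phase_cancel (z : Circle) : (z * conj (z : ℂ) : ℂ) = 1 := by
    rw [Complex.mul_conj, Circle.normSq_coe, Complex.ofReal_one]
  simp only [specMat, of_apply, map_apply, dft_conjReflect, map_mul]
  rw [mul_mul_mul_comm, phase_cancel, one_mul]

theorem specMat_conjReflect_eq_iff :
    specMat N M (fun i => conjReflect (x i)) m = specMat N M x m ↔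
      (dft N M (x 0) m * conj (dft N M (x 1) m)).im = 0 := by
  rw [specMat_conjReflect, map_conj_eq_self_iff_of_isHermitian (isHermitian_specMat M x m)]
  simp [Fin.forall_fin_two, specMat]

end SpectralMatrix

/-- Conjugate reflection `x'ᵢ[n] = conj(xᵢ[N−1−n])` leaves all the
spectral matrices `𝔉[m]`, `m < M`, unchanged if and only if
`Im(X̂₁[m]·conj(X̂₂[m])) = 0` for every `m < M`, i.e. iff the two Fourier components
are in phase at every measured frequency. -/
theorem specMat_conjReflect_invariant_iff (N M : ℕ) (hN : 0 < N) (hM : 0 < M)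
    (x x' : Fin 2 → Fin N → ℂ)
    (hx' : ∀ (i : Fin 2) (n : Fin N), x' i n = (starRingEnd ℂ) (x i n.rev)) :
    (∀ m : Fin M, specMat N M x' (m : ℕ) = specMat N M x (m : ℕ))
      ↔ (∀ m : Fin M, (dft N M (x 0) (m : ℕ) * (starRingEnd ℂ) (dft N M (x 1) (m : ℕ))).im = 0) := by
  obtain rfl : x' = fun i => conjReflect (x i) := funext₂ hx'
  exact forall_congr' fun m => specMat_conjReflect_eq_iff M x m
end

section
/- Let x₁, x₂ : ℤ → ℂ be finitely supported signals, neither identically zero, let n₁, n₂ ∈ ℤ, and define the shifted signals x'₁[n] = x₁[n−n₁] and x'₂[n] = x₂[n−n₂]. Then the shifted pair has the same correlation functions as the original pair — γ_{x'ᵢ x'ⱼ}[n] = γ_{xᵢ xⱼ}[n] for all i, j ∈ {1,2} and all n ∈ ℤ — if and only if n₁ = n₂. -/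
/-- The correlation function of two finitely supported signals `u, v : ℤ → ℂ`:
`γ_{uv}[n] = ∑_{k∈ℤ} u[k+n]·conj(v[k])`. -/
noncomputable def corr (u v : ℤ → ℂ) (n : ℤ) : ℂ :=
  ∑' k : ℤ, u (k + n) * (starRingEnd ℂ) (v k)

/-!
Shifting `u` by `a` and `v` by `b` replaces `γ_{uv}[n]` by `γ_{uv}[n + b - a]`, so invariance makes
`γ_{x₁x₂}` periodic with period `n₂ - n₁`. If `M` is the last point of the support of `x₁` and `m`
the first point of the support of `x₂`, then `M - m` is the last point of the support of
`γ_{x₁x₂}`, where its value is the single product `x₁[M]·conj(x₂[m])`. A periodic function whose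
support has a last point has period zero.
-/

open Function

theorem eq_zero_of_periodic_of_isGreatest_support {G R : Type*} [AddCommGroup G] [LinearOrder G]
    [IsOrderedAddMonoid G] [Zero R] {f : G → R} {c D : G}
    (hf : Periodic f c) (hD : IsGreatest (support f) D) : c = 0 := by
  have hadd : D + c ≤ D := hD.2 <| by simpa only [mem_support, hf D] using hD.1
  have hsub : D - c ≤ D := hD.2 <| by simpa only [mem_support, hf.sub_eq D] using hD.1
  exact le_antisymm (add_le_iff_nonpos_right D |>.1 hadd) (sub_le_self_iff D |>.1 hsub)

theorem corr_comp_sub_const (u v : ℤ → ℂ) (a b n : ℤ) :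
    corr (fun k => u (k - a)) (fun k => v (k - b)) n = corr u v (n + (b - a)) := by
  unfold corr
  rw [← (Equiv.addRight b).tsum_eq]
  refine tsum_congr fun k => ?_
  have hindex : k + b + n - a = k + (n + (b - a)) := by ring
  simp only [Equiv.coe_addRight, add_sub_cancel_right, hindex]

section Support

variable {u v : ℤ → ℂ} {M m : ℤ}

theorem eq_of_corr_summand_ne_zero (hM : M ∈ upperBounds (support u))
    (hm : m ∈ lowerBounds (support v)) {n k : ℤ} (hn : M - m ≤ n)
    (hk : u (k + n) * starRingEnd ℂ (v k) ≠ 0) : k = m ∧ n = M - m := by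
  have hu : k + n ≤ M := hM (left_ne_zero_of_mul hk)
  have hv : m ≤ k := hm <| (map_ne_zero _).1 (right_ne_zero_of_mul hk)
  omega

theorem corr_sub_eq_mul (hM : M ∈ upperBounds (support u)) (hm : m ∈ lowerBounds (support v)) :
    corr u v (M - m) = u M * starRingEnd ℂ (v m) := by
  have hsummand (k : ℤ) (hk : k ≠ m) : u (k + (M - m)) * starRingEnd ℂ (v k) = 0 := by
    by_contra h
    exact hk (eq_of_corr_summand_ne_zero hM hm le_rfl h).1
  rw [corr, tsum_eq_single m hsummand, add_sub_cancel]

theorem corr_eq_zero_of_sub_lt (hM : M ∈ upperBounds (support u))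
    (hm : m ∈ lowerBounds (support v)) {n : ℤ} (hn : M - m < n) : corr u v n = 0 := by
  have hsummand (k : ℤ) : u (k + n) * starRingEnd ℂ (v k) = 0 := by
    by_contra h
    exact hn.ne' (eq_of_corr_summand_ne_zero hM hm hn.le h).2
  simp only [corr, hsummand, tsum_zero]

theorem isGreatest_support_corr (hM : IsGreatest (support u) M) (hm : IsLeast (support v) m) :
    IsGreatest (support (corr u v)) (M - m) := by
  constructor
  · rw [mem_support, corr_sub_eq_mul hM.2 hm.2]
    exact mul_ne_zero hM.1 ((map_ne_zero _).2 hm.1)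
  · intro n hn
    by_contra! hlt
    exact hn (corr_eq_zero_of_sub_lt hM.2 hm.2 hlt)

theorem exists_isGreatest_support_corr (hu : BddAbove (support u)) (hv : BddBelow (support v))
    (hu₀ : u ≠ 0) (hv₀ : v ≠ 0) : ∃ D, IsGreatest (support (corr u v)) D := by
  obtain ⟨M, hM⟩ := hu.exists_isGreatest_of_nonempty (support_nonempty_iff.2 hu₀)
  obtain ⟨m, hm⟩ := hv.exists_isLeast_of_nonempty (support_nonempty_iff.2 hv₀)
  exact ⟨M - m, isGreatest_support_corr hM hm⟩

end Support

-- The autocorrelations may be divergent series here, with junk value `0`;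
-- `γ_{x₁x₂}` is still given by finite sums.
theorem corr_shift_invariant_iff_general (x₁ x₂ : ℤ → ℂ)
    (hbdd₁ : BddAbove (support x₁)) (hbdd₂ : BddBelow (support x₂))
    (hx₁ : x₁ ≠ 0) (hx₂ : x₂ ≠ 0) (n₁ n₂ : ℤ) :
    (∀ (i j : Fin 2) (n : ℤ),
        corr (fun k => ![x₁, x₂] i (k - ![n₁, n₂] i))
             (fun k => ![x₁, x₂] j (k - ![n₁, n₂] j)) n
          = corr (![x₁, x₂] i) (![x₁, x₂] j) n)
      ↔ n₁ = n₂ := by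
  constructor
  · intro h
    have hperiodic : Periodic (corr x₁ x₂) (n₂ - n₁) := fun n =>
      (corr_comp_sub_const x₁ x₂ n₁ n₂ n).symm.trans (h 0 1 n)
    obtain ⟨D, hD⟩ := exists_isGreatest_support_corr hbdd₁ hbdd₂ hx₁ hx₂
    exact (sub_eq_zero.1 (eq_zero_of_periodic_of_isGreatest_support hperiodic hD)).symm
  · rintro rfl i j n
    have hshift : ∀ i : Fin 2, ![n₁, n₁] i = n₁ := Fin.forall_fin_two.2 ⟨rfl, rfl⟩
    rw [corr_comp_sub_const, hshift i, hshift j, sub_self, add_zero]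

/-- For finitely supported, not identically zero signals `x₁, x₂ : ℤ → ℂ`,
the pair of shifted signals `x'₁[n] = x₁[n−n₁]`, `x'₂[n] = x₂[n−n₂]` has the same
correlation functions `γ_{xᵢxⱼ}` as the original pair (for all `i, j ∈ {1,2}` and all `n`)
if and only if the shifts coincide: `n₁ = n₂`. -/
theorem corr_shift_invariant_iff (x₁ x₂ : ℤ → ℂ)
    (hfin₁ : (Function.support x₁).Finite) (hfin₂ : (Function.support x₂).Finite)
    (hx₁ : x₁ ≠ 0) (hx₂ : x₂ ≠ 0) (n₁ n₂ : ℤ) :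
    (∀ (i j : Fin 2) (n : ℤ),
        corr (fun k => ![x₁, x₂] i (k - ![n₁, n₂] i))
             (fun k => ![x₁, x₂] j (k - ![n₁, n₂] j)) n
          = corr (![x₁, x₂] i) (![x₁, x₂] j) n)
      ↔ n₁ = n₂ :=
  corr_shift_invariant_iff_general x₁ x₂ hfin₁.bddAbove hfin₂.bddBelow hx₁ hx₂ n₁ n₂
end

section
/- Let L ≥ 1 and let A, B ∈ ℂ[z] be nonzero polynomials with natDegree A ≤ L and natDegree B ≤ L. Define K = natDegree(gcd(A, B)) + min(L − natDegree A, L − natDegree B) (the extended degree of the greatest common divisor, which counts common roots at infinity). Then the 2L × 2L Sylvester matrix S₁(A, B) has rank 2L − K. In particular, S₁(A, B) is rank deficient if and only if A and B have a common root in ℂ or both natDegree A < L and natDegree B < L. -/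
open Polynomial Matrix

/-- The Sylvester-type matrix `S_D(A, B)` for polynomials of degree at most `L`,
parameterized by `d = L − D` (so that `D = L − d`): it has `L + d + 1 = 2L − D + 1` rows
and `2(d + 1) = 2(L − D + 1)` columns. Columns `0, …, d` hold shifted copies of the
coefficient vector of `A`, columns `d+1, …, 2d+1` hold shifted copies of the coefficient
vector of `B`. -/
noncomputable def sylv (L d : ℕ) (A B : Polynomial ℂ) :
    Matrix (Fin (L + d + 1)) (Fin (2 * (d + 1))) ℂ :=
  Matrix.of fun i j =>
    if (j : ℕ) ≤ d then
      (if (j : ℕ) ≤ (i : ℕ) then A.coeff ((i : ℕ) - (j : ℕ)) else 0)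
    else
      (if (j : ℕ) - (d + 1) ≤ (i : ℕ) then B.coeff ((i : ℕ) - ((j : ℕ) - (d + 1))) else 0)

/-!
The columns of `S_D(A, B)` are the coefficient vectors of `A, zA, …, z^(L-D) A` and
`B, zB, …, z^(L-D) B`, so the matrix represents `(p, q) ↦ p A + q B` on pairs of polynomials of
degree at most `L - D`. If `A = g A'` and `B = g B'` with `g` the gcd, the solutions of
`p A + q B = 0` are the pairs `(t B', -t A')`. The degree bounds on `p` and `q` confine `t` to a
space of polynomials of bounded degree, whose dimension is the nullity of the matrix.
-/

section DegreeLT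

variable {R : Type*} [Semiring R]

theorem mul_mem_degreeLT {p f : R[X]} {m r : ℕ} (hp : p ∈ R[X]_m) (hf : m + f.natDegree ≤ r) :
    p * f ∈ R[X]_r := by
  rw [mem_degreeLT, degree_lt_iff_coeff_zero] at hp ⊢
  intro k hk
  rw [coeff_mul]
  refine Finset.sum_eq_zero fun ij hij ↦ ?_
  rw [Finset.HasAntidiagonal.mem_antidiagonal] at hij
  obtain hi | hj : m ≤ ij.1 ∨ f.natDegree < ij.2 := by omega
  · rw [hp _ hi, zero_mul]
  · rw [coeff_eq_zero_of_natDegree_lt hj, mul_zero]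

-- For `m ≤ deg f` the truncated subtraction makes the right-hand side say `p = 0`.
theorem mul_mem_degreeLT_iff [NoZeroDivisors R] {p f : R[X]} (hf : f ≠ 0) {m : ℕ} :
    p * f ∈ R[X]_m ↔ p ∈ R[X]_(m - f.natDegree) := by
  obtain rfl | hp := eq_or_ne p 0
  · simp
  · rw [mem_degreeLT, mem_degreeLT, ← natDegree_lt_iff_degree_lt hp,
      ← natDegree_lt_iff_degree_lt (mul_ne_zero hp hf), natDegree_mul hp hf]
    omega

theorem mem_degreeLT_min_iff {p : R[X]} {m n : ℕ} :
    p ∈ R[X]_(min m n) ↔ p ∈ R[X]_m ∧ p ∈ R[X]_n := by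
  rw [mem_degreeLT, Nat.mono_cast.map_min, lt_min_iff, ← mem_degreeLT, ← mem_degreeLT]

theorem finrank_degreeLT [StrongRankCondition R] (n : ℕ) :
    Module.finrank R R[X]_n = n := by
  rw [(degreeLTEquiv R n).finrank_eq, Module.finrank_fin_fun]

end DegreeLT

section Gcd

theorem mul_add_mul_eq_zero_iff_of_isCoprime {R : Type*} [CommRing R] {a b : R}
    (h : IsCoprime a b) {x y : R} :
    x * a + y * b = 0 ↔ ∃ t, x = t * b ∧ y = -(t * a) := by
  constructor
  · obtain ⟨u, v, huv⟩ := h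
    intro hxy
    exact ⟨x * v - y * u, by linear_combination u * hxy - x * huv,
      by linear_combination v * hxy - y * huv⟩
  · rintro ⟨t, rfl, rfl⟩
    ring

theorem exists_isCoprime_gcd_mul {R : Type*} [EuclideanDomain R] [DecidableEq R] (a b : R) :
    ∃ a' b', a = EuclideanDomain.gcd a b * a' ∧ b = EuclideanDomain.gcd a b * b' ∧
      IsCoprime a' b' := by
  let := EuclideanDomain.gcdMonoid R
  obtain ⟨a', b', ha, hb, hunit⟩ := extract_gcd a b
  exact ⟨a', b', ha, hb, EuclideanDomain.gcd_isUnit_iff.mp hunit⟩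

theorem exists_common_root_iff_natDegree_gcd_pos {F : Type*} [Field F] [IsAlgClosed F]
    [DecidableEq F] {f g : F[X]} (hf : f ≠ 0) :
    (∃ α, f.eval α = 0 ∧ g.eval α = 0) ↔ 0 < (EuclideanDomain.gcd f g).natDegree := by
  have hgcd : EuclideanDomain.gcd f g ≠ 0 := fun h ↦ hf (EuclideanDomain.gcd_eq_zero_iff.mp h).1
  calc (∃ α, f.eval α = 0 ∧ g.eval α = 0)
      ↔ ∃ α, (EuclideanDomain.gcd f g).IsRoot α :=
        exists_congr fun _ ↦ isRoot_gcd_iff_isRoot_left_right.symm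
    _ ↔ 0 < (EuclideanDomain.gcd f g).degree :=
        ⟨fun ⟨_, hα⟩ ↦ degree_pos_of_root hgcd hα, fun h ↦ IsAlgClosed.exists_root _ h.ne'⟩
    _ ↔ 0 < (EuclideanDomain.gcd f g).natDegree := natDegree_pos_iff_degree_pos.symm

end Gcd

section BezoutMap

variable {R : Type*} [CommRing R]

/-- The map `(p, q) ↦ p f + q g` on pairs of polynomials with `deg p < m` and `deg q < n`, the
linear map represented by Sylvester-type matrices. Its codomain is all of `R[X]`, so that no
degree bound on `f` and `g` is needed to define it. -/
noncomputable def bezoutMap (f g : R[X]) (m n : ℕ) : R[X]_m × R[X]_n →ₗ[R] R[X] :=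
  (LinearMap.mulRight R f ∘ₗ (R[X]_m).subtype).coprod (LinearMap.mulRight R g ∘ₗ (R[X]_n).subtype)

@[simp]
theorem bezoutMap_apply (f g : R[X]) (m n : ℕ) (x : R[X]_m × R[X]_n) :
    bezoutMap f g m n x = x.1 * f + x.2 * g :=
  rfl

theorem bezoutMap_apply_mem_degreeLT {f g : R[X]} {m n r : ℕ} (hf : m + f.natDegree ≤ r)
    (hg : n + g.natDegree ≤ r) (x : R[X]_m × R[X]_n) : bezoutMap f g m n x ∈ R[X]_r :=
  add_mem (mul_mem_degreeLT x.1.2 hf) (mul_mem_degreeLT x.2.2 hg)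

variable [IsDomain R]

theorem ker_bezoutMap_mul_left {c : R[X]} (hc : c ≠ 0) (f g : R[X]) (m n : ℕ) :
    LinearMap.ker (bezoutMap (c * f) (c * g) m n) = LinearMap.ker (bezoutMap f g m n) := by
  ext x
  have hx : bezoutMap (c * f) (c * g) m n x = c * bezoutMap f g m n x := by
    simp only [bezoutMap_apply]
    ring
  rw [LinearMap.mem_ker, LinearMap.mem_ker, hx, mul_eq_zero_iff_left hc]

/-- The map `t ↦ (t g, -t f)` parametrizing the syzygies `p f + q g = 0` of coprime `f` and `g`. -/
noncomputable def syzygyMap (f g : R[X]) : R[X] →ₗ[R] R[X] × R[X] :=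
  (LinearMap.mulRight R g).prod (-LinearMap.mulRight R f)

theorem syzygyMap_injective (f : R[X]) {g : R[X]} (hg : g ≠ 0) :
    Function.Injective (syzygyMap f g) :=
  fun _ _ h ↦ mul_right_cancel₀ hg (congrArg Prod.fst h)

theorem map_ker_bezoutMap_of_isCoprime {f g : R[X]} (hf : f ≠ 0) (hg : g ≠ 0)
    (h : IsCoprime f g) (m n : ℕ) :
    (LinearMap.ker (bezoutMap f g m n)).map ((R[X]_m).subtype.prodMap (R[X]_n).subtype) =
      (R[X]_(min (m - g.natDegree) (n - f.natDegree))).map (syzygyMap f g) := by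
  ext ⟨p, q⟩
  constructor
  · rintro ⟨⟨⟨p, hp⟩, ⟨q, hq⟩⟩, hker, ⟨⟩⟩
    obtain ⟨t, rfl, rfl⟩ := (mul_add_mul_eq_zero_iff_of_isCoprime h).mp hker
    rw [neg_mem_iff] at hq
    exact ⟨t, mem_degreeLT_min_iff.mpr
      ⟨(mul_mem_degreeLT_iff hg).mp hp, (mul_mem_degreeLT_iff hf).mp hq⟩, rfl⟩
  · rintro ⟨t, ht, ⟨⟩⟩
    obtain ⟨htg, htf⟩ := mem_degreeLT_min_iff.mp ht
    exact ⟨(⟨t * g, (mul_mem_degreeLT_iff hg).mpr htg⟩,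
      ⟨-(t * f), neg_mem ((mul_mem_degreeLT_iff hf).mpr htf)⟩),
      (mul_add_mul_eq_zero_iff_of_isCoprime h).mpr ⟨t, rfl, rfl⟩, rfl⟩

theorem finrank_ker_bezoutMap_of_isCoprime {f g : R[X]} (hf : f ≠ 0) (hg : g ≠ 0)
    (h : IsCoprime f g) (m n : ℕ) :
    Module.finrank R (LinearMap.ker (bezoutMap f g m n)) =
      min (m - g.natDegree) (n - f.natDegree) := by
  have hincl : Function.Injective ((R[X]_m).subtype.prodMap (R[X]_n).subtype) :=
    Subtype.val_injective.prodMap Subtype.val_injective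
  rw [(Submodule.equivMapOfInjective _ hincl _).finrank_eq,
    map_ker_bezoutMap_of_isCoprime hf hg h,
    ← (Submodule.equivMapOfInjective _ (syzygyMap_injective f hg) _).finrank_eq, finrank_degreeLT]

theorem finrank_ker_bezoutMap {F : Type*} [Field F] [DecidableEq F] {f g : F[X]} (hf : f ≠ 0)
    (hg : g ≠ 0) (m n : ℕ) :
    Module.finrank F (LinearMap.ker (bezoutMap f g m n)) =
      min (m + (EuclideanDomain.gcd f g).natDegree - g.natDegree)
        (n + (EuclideanDomain.gcd f g).natDegree - f.natDegree) := by
  obtain ⟨f', g', hf', hg', hcop⟩ := exists_isCoprime_gcd_mul f g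
  generalize EuclideanDomain.gcd f g = c at *
  subst hf' hg'
  obtain ⟨hc, hf'⟩ := mul_ne_zero_iff.mp hf
  have hg' := right_ne_zero_of_mul hg
  rw [ker_bezoutMap_mul_left hc, finrank_ker_bezoutMap_of_isCoprime hf' hg' hcop,
    natDegree_mul hc hf', natDegree_mul hc hg']
  omega

end BezoutMap

theorem rank_toMatrix {R M N ι κ : Type*} [CommSemiring R] [AddCommMonoid M] [Module R M]
    [AddCommMonoid N] [Module R N] [Fintype ι] [DecidableEq ι] [Finite κ]
    (b : Module.Basis ι R M) (c : Module.Basis κ R N) (φ : M →ₗ[R] N) :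
    (LinearMap.toMatrix b c φ).rank = Module.finrank R (LinearMap.range φ) := by
  rw [Matrix.rank_eq_finrank_range_toLin _ c b, Matrix.toLin_toMatrix]

theorem sylv_eq_toMatrix {L : ℕ} (d : ℕ) {A B : ℂ[X]} (hA : A.natDegree ≤ L)
    (hB : B.natDegree ≤ L) :
    sylv L d A B = LinearMap.toMatrix
      ((degreeLT.basisProd ℂ (d + 1) (d + 1)).reindex (finCongr (two_mul _).symm))
      (degreeLT.basis ℂ (L + d + 1))
      ((bezoutMap A B (d + 1) (d + 1)).codRestrict _
        (bezoutMap_apply_mem_degreeLT (by omega) (by omega))) := by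
  ext i j
  obtain ⟨j, rfl⟩ := (finCongr (two_mul (d + 1)).symm).surjective j
  rw [LinearMap.toMatrix_apply, Module.Basis.reindex_apply, Equiv.symm_apply_apply]
  induction j using Fin.addCases with
  | left j => simp [sylv, coeff_X_pow_mul', Nat.le_of_lt_succ j.2]
  | right j =>
    have hcol : ¬d + 1 + j ≤ d := by omega
    have hrow : d + 1 + j ≤ (i : ℕ) + (d + 1) ↔ (j : ℕ) ≤ i := by omega
    simp [sylv, coeff_X_pow_mul', hcol, hrow, -Fin.natAdd_eq_addNat]

theorem rank_sylv_add_finrank_ker_bezoutMap {L : ℕ} (d : ℕ) {A B : ℂ[X]} (hA : A.natDegree ≤ L)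
    (hB : B.natDegree ≤ L) :
    (sylv L d A B).rank + Module.finrank ℂ (LinearMap.ker (bezoutMap A B (d + 1) (d + 1))) =
      2 * (d + 1) := by
  have hmem (x) : bezoutMap A B (d + 1) (d + 1) x ∈ ℂ[X]_(L + d + 1) :=
    bezoutMap_apply_mem_degreeLT (by omega) (by omega) x
  rw [sylv_eq_toMatrix d hA hB, rank_toMatrix, ← LinearMap.ker_codRestrict _ _ hmem,
    LinearMap.finrank_range_add_finrank_ker, Module.finrank_prod, finrank_degreeLT, two_mul]

-- The minimum is the number of columns iff the extended degree of the gcd is less than `D = L - d`.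
theorem sylvester_rank_general (L d : ℕ) (A B : ℂ[X]) (hA : A ≠ 0) (hB : B ≠ 0)
    (hdA : A.natDegree ≤ L) (hdB : B.natDegree ≤ L) :
    (sylv L d A B).rank = min (2 * (d + 1))
      (L + d + 1 - ((EuclideanDomain.gcd A B).natDegree
        + min (L - A.natDegree) (L - B.natDegree))) := by
  have hrank := rank_sylv_add_finrank_ker_bezoutMap d hdA hdB
  rw [finrank_ker_bezoutMap hA hB] at hrank
  have hgA := natDegree_le_of_dvd (EuclideanDomain.gcd_dvd_left A B) hA
  have hgB := natDegree_le_of_dvd (EuclideanDomain.gcd_dvd_right A B) hB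
  omega

/-- Sylvester's theorem, extended-degree form. For nonzero polynomials
`A, B` of degree at most `L`, the `2L × 2L` Sylvester matrix `S₁(A, B) = sylv L (L−1) A B`
has rank `2L − K`, where `K = natDegree (gcd A B) + min (L − natDegree A) (L − natDegree B)`
is the extended degree of the GCD (counting common roots at infinity). In particular,
`S₁(A, B)` is rank deficient iff `A` and `B` have a common root in `ℂ` or both have
degree strictly less than `L`. -/
theorem sylvester_rank (L : ℕ) (hL : 1 ≤ L) (A B : Polynomial ℂ)
    (hA : A ≠ 0) (hB : B ≠ 0) (hdA : A.natDegree ≤ L) (hdB : B.natDegree ≤ L) :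
    (sylv L (L - 1) A B).rank
        = 2 * L - ((EuclideanDomain.gcd A B).natDegree
            + min (L - A.natDegree) (L - B.natDegree))
      ∧ ((sylv L (L - 1) A B).rank < 2 * L ↔
          (∃ α : ℂ, A.eval α = 0 ∧ B.eval α = 0)
            ∨ (A.natDegree < L ∧ B.natDegree < L)) := by
  rw [exists_common_root_iff_natDegree_gcd_pos hA,
    sylvester_rank_general L (L - 1) A B hA hB hdA hdB]
  omega
end

section
/- Let L ≥ 1, let A, B ∈ ℂ[z] be nonzero with natDegree A ≤ L and natDegree B ≤ L, let D ≤ 1 be an integer, and set K = natDegree(gcd(A, B)) + min(L − natDegree A, L − natDegree B). Then: (1) the extended Sylvester matrix S_D(A, B), with 2L−D+1 rows and 2(L−D+1) columns, has rank 2L−D+1−K, so its left kernel has dimension K; (2) a vector u ∈ ℂ^{2L−D+1} satisfies uᵀ·S_D(A, B) = 0 if and only if hᵀ·Hank_{K+1}(u) = 0, where h ∈ ℂ^{K+1} is given by h[k] = (gcd(A, B)).coeff k for 0 ≤ k ≤ K, and Hank_{K+1}(u) is the (K+1) × (2L−D−K+1) Hankel matrix with entries Hank_{K+1}(u)[i,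 j] = u[i+j]. -/
open Polynomial Matrix

/-!
The column space of `S_D(A, B)` is the space of coefficient vectors of the polynomials
`A * P + B * Q` with `deg P, deg Q ≤ d`, where `d = L - D`. Write `A = G * a` and `B = G * b` with
`G = gcd A B`, so that `a` and `b` are coprime. If `deg a, deg b ≤ d + 1`, equivalently
`D ≤ K + 1`, then Bézout's identity with the cofactors reduced modulo `a` or `b` shows that the
sums `a * P + b * Q` are exactly the polynomials of degree at most
`d + max (deg a) (deg b) = L + d - K`. Hence the vectors of `G * X ^ j` with `j ≤ L + d - K` are a
basis of the column space. This gives the rank, and `u` lies in the left kernel iff it is orthogonal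
to all these vectors, which are the equations `hᵀ · Hank_{K+1}(u) = 0`.
-/

section CommSemiring

variable {R : Type*} [CommSemiring R]

/-- The multiples `a * P` of `a` by polynomials `P` of degree less than `n`. -/
noncomputable def degreeLTMultiples (n : ℕ) (a : R[X]) : Submodule R R[X] :=
  (degreeLT R n).map (LinearMap.mulLeft R a)

lemma mem_degreeLTMultiples {n : ℕ} {a Q : R[X]} :
    Q ∈ degreeLTMultiples n a ↔ ∃ P : R[X], P.degree < n ∧ a * P = Q := by
  simp [degreeLTMultiples, mem_degreeLT]

lemma degreeLTMultiples_mul (n : ℕ) (g a : R[X]) :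
    degreeLTMultiples n (g * a) = (degreeLTMultiples n a).map (LinearMap.mulLeft R g) := by
  rw [degreeLTMultiples, LinearMap.mulLeft_mul, Submodule.map_comp, degreeLTMultiples]

lemma degreeLTMultiples_le_degreeLT {a : R[X]} {m n : ℕ} (h : a.natDegree + n ≤ m) :
    degreeLTMultiples n a ≤ degreeLT R m := by
  intro Q hQ
  obtain ⟨P, hP, rfl⟩ := mem_degreeLTMultiples.1 hQ
  rw [mem_degreeLT]
  calc (a * P).degree ≤ a.degree + P.degree := degree_mul_le a P
    _ ≤ a.natDegree + P.degree := by gcongr; exact degree_le_natDegree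
    _ < a.natDegree + n := WithBot.add_lt_add_left (WithBot.natCast_ne_bot _) hP
    _ ≤ m := by exact_mod_cast h

end CommSemiring

section IsDomain

variable {R : Type*} [CommRing R] [IsDomain R] {a b : R[X]}

lemma finrank_degreeLTMultiples (n : ℕ) (ha : a ≠ 0) :
    Module.finrank R (degreeLTMultiples n a) = n := by
  have hinj : Function.Injective (LinearMap.mulLeft R a) := mul_right_injective₀ ha
  rw [degreeLTMultiples, ← (Submodule.equivMapOfInjective _ hinj _).finrank_eq,
    (degreeLTEquiv R n).finrank_eq, Module.finrank_fin_fun]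

lemma max_natDegree_mul_of_isCoprime {g : R[X]} (hg : g ≠ 0) (hab : IsCoprime a b) :
    max (g * a).natDegree (g * b).natDegree = g.natDegree + max a.natDegree b.natDegree := by
  rcases eq_or_ne a 0 with rfl | ha
  · have hb : IsUnit b := isCoprime_zero_left.1 hab
    simp [natDegree_mul hg hb.ne_zero, natDegree_eq_zero_of_isUnit hb]
  rcases eq_or_ne b 0 with rfl | hb
  · have ha' : IsUnit a := isCoprime_zero_right.1 hab
    simp [natDegree_mul hg ha, natDegree_eq_zero_of_isUnit ha']
  rw [natDegree_mul hg ha, natDegree_mul hg hb, max_add_add_left]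

end IsDomain

lemma exists_isCoprime_eq_gcd_mul {R : Type*} [EuclideanDomain R] [DecidableEq R] {A B : R}
    (h : EuclideanDomain.gcd A B ≠ 0) :
    ∃ a b, IsCoprime a b ∧ A = EuclideanDomain.gcd A B * a ∧ B = EuclideanDomain.gcd A B * b := by
  let := EuclideanDomain.gcdMonoid R
  exact ⟨_, _, isCoprime_div_gcd_div_gcd_of_gcd_ne_zero h,
    (EuclideanDomain.mul_div_cancel' h (EuclideanDomain.gcd_dvd_left A B)).symm,
    (EuclideanDomain.mul_div_cancel' h (EuclideanDomain.gcd_dvd_right A B)).symm⟩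

section Field

variable {F : Type*} [Field F] {a b : F[X]}

lemma degreeLT_le_degreeLTMultiples_sup (hab : IsCoprime a b) (ha₀ : a ≠ 0) {n : ℕ}
    (hb : b.natDegree ≤ n) :
    degreeLT F (a.natDegree + n) ≤ degreeLTMultiples n a ⊔ degreeLTMultiples a.natDegree b := by
  intro R hR
  obtain ⟨s, t, hst⟩ := hab
  -- Reduce the cofactor of `b` modulo `a`; comparing degrees in `a * P = R - b * Q` bounds `P`.
  set Q := R * t % a
  set P := R * s + b * (R * t / a)
  have hPQ : a * P + b * Q = R := by
    calc a * P + b * Q = a * (R * s) + b * (a * (R * t / a) + Q) := by ring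
      _ = R * (s * a + t * b) := by rw [EuclideanDomain.div_add_mod]; ring
      _ = R := by rw [hst, mul_one]
  have hQ : b * Q ∈ degreeLTMultiples a.natDegree b :=
    mem_degreeLTMultiples.2
      ⟨Q, (EuclideanDomain.mod_lt _ ha₀).trans_eq (degree_eq_natDegree ha₀), rfl⟩
  have haP : a * P ∈ degreeLT F (a.natDegree + n) := by
    rw [eq_sub_of_add_eq hPQ]
    exact sub_mem hR (degreeLTMultiples_le_degreeLT (by omega) hQ)
  have hP : P.degree < n := by
    rw [mem_degreeLT, degree_mul, degree_eq_natDegree ha₀, Nat.cast_add] at haP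
    exact lt_of_add_lt_add_left haP
  exact hPQ ▸ Submodule.add_mem_sup (mem_degreeLTMultiples.2 ⟨P, hP, rfl⟩) hQ

theorem degreeLTMultiples_sup_of_isCoprime (hab : IsCoprime a b) {n : ℕ}
    (ha : a.natDegree ≤ n) (hb : b.natDegree ≤ n) :
    degreeLTMultiples n a ⊔ degreeLTMultiples n b =
      degreeLT F (max a.natDegree b.natDegree + n) := by
  wlog hba : b.degree ≤ a.degree generalizing a b
  · rw [sup_comm, max_comm]
    exact this hab.symm hb ha (le_of_not_ge hba)
  have ha₀ : a ≠ 0 := by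
    rintro rfl
    exact hab.ne_zero_or_ne_zero.elim (· rfl) (· (by simpa using hba))
  refine le_antisymm
    (sup_le (degreeLTMultiples_le_degreeLT (by gcongr; exact le_max_left _ _))
      (degreeLTMultiples_le_degreeLT (by gcongr; exact le_max_right _ _))) ?_
  rw [max_eq_left (natDegree_le_natDegree hba)]
  exact (degreeLT_le_degreeLTMultiples_sup hab ha₀ hb).trans
    (sup_le_sup_left (Submodule.map_mono (degreeLT_mono ha)) _)

end Field

section ColumnSpace

variable {R m n₁ n₂ : Type*} [CommSemiring R] [Fintype n₁] [Fintype n₂]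

lemma range_mulVecLin_fromCols (M₁ : Matrix m n₁ R) (M₂ : Matrix m n₂ R) :
    (fromCols M₁ M₂).mulVecLin.range = M₁.mulVecLin.range ⊔ M₂.mulVecLin.range := by
  have hcol : (fromCols M₁ M₂).col = Sum.elim M₁.col M₂.col := by
    ext (j | j) i <;> rfl
  simp only [range_mulVecLin, hcol, Set.Sum.elim_range, Submodule.span_union]

lemma vecMul_eq_zero_iff_forall_mem_range [Fintype m] {u : m → R} {M : Matrix m n₁ R} :
    u ᵥ* M = 0 ↔ ∀ v ∈ M.mulVecLin.range, u ⬝ᵥ v = 0 := by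
  simp [← dotProduct_eq_zero_iff, dotProduct_mulVec]

end ColumnSpace

section ConvMatrix

/-- The Hankel matrix `Hank_{K+1}(u)` of a vector `u` of length `N`, with the largest number of
columns for which all the indices `i + j` stay below `N`. -/
def hankel {α : Type*} {N : ℕ} (K : ℕ) (u : Fin N → α) :
    Matrix (Fin (K + 1)) (Fin (N - K)) α :=
  Matrix.of fun i j => u ⟨(i : ℕ) + (j : ℕ), by omega⟩

variable {R : Type*} [CommSemiring R]

variable (R) in
/-- The first `N` coefficients of a polynomial, as a linear map. -/
noncomputable def coeffVec (N : ℕ) : R[X] →ₗ[R] Fin N → R :=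
  LinearMap.pi fun i => lcoeff R i

/-- The matrix with `N` rows of multiplication by `g` on polynomials of degree less than `n`, in
the monomial bases: its `n` columns are shifted copies of the coefficient vector of `g`. -/
noncomputable def convMatrix (N n : ℕ) (g : R[X]) : Matrix (Fin N) (Fin n) R :=
  Matrix.of fun i j => (g * X ^ (j : ℕ)).coeff i

/-- The matrix `S_D(A, B)` over any coefficient semiring, with `N` rows and with `n` shifted copies
of each of `A` and `B` as columns; the classical sizes are `N = 2L - D + 1` and `n = L - D + 1`. -/
noncomputable def extendedSylvester (N n : ℕ) (A B : R[X]) :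
    Matrix (Fin N) (Fin n ⊕ Fin n) R :=
  fromCols (convMatrix N n A) (convMatrix N n B)

lemma range_mulVecLin_convMatrix (N n : ℕ) (g : R[X]) :
    (convMatrix N n g).mulVecLin.range = (degreeLTMultiples n g).map (coeffVec R N) := by
  have hcol : (convMatrix N n g).col = fun j : Fin n => coeffVec R N (g * X ^ (j : ℕ)) := rfl
  classical
  rw [range_mulVecLin, hcol, degreeLTMultiples, degreeLT_eq_span_X_pow, Submodule.map_span,
    Submodule.map_span]
  congr 1
  ext v
  simp [Fin.exists_iff]

lemma disjoint_degreeLT_ker_coeffVec (N : ℕ) :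
    Disjoint (degreeLT R N) (coeffVec R N).ker := by
  rw [Submodule.disjoint_def]
  intro P hP hker
  ext i
  rcases lt_or_ge i N with hi | hi
  · exact congrFun hker ⟨i, hi⟩
  · exact coeff_eq_zero_of_degree_lt ((mem_degreeLT.1 hP).trans_le (by exact_mod_cast hi))

theorem vecMul_convMatrix_eq_vecMul_hankel {N K : ℕ} {g : R[X]} (hg : g.natDegree ≤ K)
    (u : Fin N → R) :
    u ᵥ* convMatrix N (N - K) g = (fun k : Fin (K + 1) => g.coeff k) ᵥ* hankel K u := by
  ext j
  symm
  refine Fintype.sum_of_injective (fun k : Fin (K + 1) => (⟨k + j, by omega⟩ : Fin N))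
    (fun k l hkl => by simpa [Fin.ext_iff] using hkl) _ _ (fun i hi => ?_) (fun k => ?_)
  · suffices (g * X ^ (j : ℕ)).coeff i = 0 by simp [convMatrix, this]
    rw [coeff_mul_X_pow', ite_eq_right_iff]
    intro hji
    refine coeff_eq_zero_of_natDegree_lt (hg.trans_lt (not_le.1 fun hK => hi ?_))
    exact ⟨⟨i - j, by omega⟩, Fin.ext (Nat.sub_add_cancel hji)⟩
  · simp [convMatrix, hankel, coeff_mul_X_pow, mul_comm]

end ConvMatrix

theorem rank_convMatrix {R : Type*} [CommRing R] [IsDomain R] {N n : ℕ} {g : R[X]}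
    (hg : g ≠ 0) (hN : g.natDegree + n ≤ N) :
    (convMatrix N n g).rank = n := by
  have hinj : Function.Injective ((coeffVec R N).domRestrict (degreeLTMultiples n g)) :=
    LinearMap.injective_domRestrict_iff.2
      ((disjoint_degreeLT_ker_coeffVec N).mono_left (degreeLTMultiples_le_degreeLT hN))
  rw [Matrix.rank, range_mulVecLin_convMatrix, ← LinearMap.range_domRestrict,
    LinearMap.finrank_range_of_inj hinj, finrank_degreeLTMultiples n hg]

section Sylvester

variable {F : Type*} [Field F]

theorem range_mulVecLin_extendedSylvester {a b : F[X]} (hab : IsCoprime a b) {n : ℕ}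
    (ha : a.natDegree ≤ n) (hb : b.natDegree ≤ n) (N : ℕ) (g : F[X]) :
    (extendedSylvester N n (g * a) (g * b)).mulVecLin.range =
      (convMatrix N (max a.natDegree b.natDegree + n) g).mulVecLin.range := by
  rw [extendedSylvester, range_mulVecLin_fromCols, range_mulVecLin_convMatrix,
    range_mulVecLin_convMatrix, range_mulVecLin_convMatrix, degreeLTMultiples_mul,
    degreeLTMultiples_mul, ← Submodule.map_sup, ← Submodule.map_sup,
    degreeLTMultiples_sup_of_isCoprime hab ha hb, degreeLTMultiples]

/-- With `D = L - d`, the hypothesis `hd` reads `D ≤ K + 1`. -/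
theorem sylvester_extended_left_kernel_general [DecidableEq F[X]] (L : ℕ) (A B : F[X])
    (hAB : A ≠ 0 ∨ B ≠ 0) (hdA : A.natDegree ≤ L) (hdB : B.natDegree ≤ L) (d K : ℕ)
    (hK : K = (EuclideanDomain.gcd A B).natDegree + min (L - A.natDegree) (L - B.natDegree))
    (hd : L ≤ d + K + 1) :
    (extendedSylvester (L + d + 1) (d + 1) A B).rank = L + d + 1 - K ∧
      ∀ u : Fin (L + d + 1) → F,
        (u ᵥ* extendedSylvester (L + d + 1) (d + 1) A B = 0 ↔
          (fun k : Fin (K + 1) => (EuclideanDomain.gcd A B).coeff (k : ℕ)) ᵥ* hankel K u = 0) := by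
  have hG : EuclideanDomain.gcd A B ≠ 0 := by
    rw [Ne, EuclideanDomain.gcd_eq_zero_iff]
    tauto
  obtain ⟨a, b, hab, hA, hB⟩ := exists_isCoprime_eq_gcd_mul hG
  set G := EuclideanDomain.gcd A B
  have hmax : max A.natDegree B.natDegree = G.natDegree + max a.natDegree b.natDegree := by
    rw [← max_natDegree_mul_of_isCoprime hG hab, ← hA, ← hB]
  have hr : max a.natDegree b.natDegree + (d + 1) = L + d + 1 - K := by omega
  have hrange := range_mulVecLin_extendedSylvester hab (n := d + 1) (by omega) (by omega)
    (L + d + 1) G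
  rw [← hA, ← hB, hr] at hrange
  constructor
  · rw [Matrix.rank, hrange]
    exact rank_convMatrix hG (by omega)
  · intro u
    rw [vecMul_eq_zero_iff_forall_mem_range, hrange, ← vecMul_eq_zero_iff_forall_mem_range,
      vecMul_convMatrix_eq_vecMul_hankel (by omega)]

/-- The column indices of `sylv L d A B`, split into those of the `A` and of the `B` block. -/
def sylvColEquiv (d : ℕ) : Fin (d + 1) ⊕ Fin (d + 1) ≃ Fin (2 * (d + 1)) :=
  finSumFinEquiv.trans (finCongr (two_mul (d + 1)).symm)

lemma sylv_submatrix_sylvColEquiv (L d : ℕ) (A B : ℂ[X]) :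
    (sylv L d A B).submatrix (Equiv.refl _) (sylvColEquiv d) =
      extendedSylvester (L + d + 1) (d + 1) A B := by
  ext i (j | j)
  · simp [sylv, sylvColEquiv, extendedSylvester, convMatrix, coeff_mul_X_pow',
      Nat.lt_succ_iff.1 j.isLt]
  · have hj : ¬ (j + (d + 1) : ℕ) ≤ d := by omega
    simp [sylv, sylvColEquiv, extendedSylvester, convMatrix, coeff_mul_X_pow', hj]

lemma rank_sylv (L d : ℕ) (A B : ℂ[X]) :
    (sylv L d A B).rank = (extendedSylvester (L + d + 1) (d + 1) A B).rank := by
  rw [← sylv_submatrix_sylvColEquiv, rank_submatrix]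

lemma vecMul_sylv_eq_zero_iff {L d : ℕ} {A B : ℂ[X]} {u : Fin (L + d + 1) → ℂ} :
    u ᵥ* sylv L d A B = 0 ↔ u ᵥ* extendedSylvester (L + d + 1) (d + 1) A B = 0 := by
  rw [← sylv_submatrix_sylvColEquiv, submatrix_vecMul_equiv, Equiv.refl_symm, Equiv.coe_refl,
    Function.comp_id]
  exact ((sylvColEquiv d).surjective.injective_comp_right.eq_iff' rfl).symm

end Sylvester

/-- Proposition 3, left kernel of extended Sylvester matrices.
Let `A, B` be nonzero of degree at most `L`, let `D ≤ 1` be an integer with `d = L − D`,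
and let `K = natDegree (gcd A B) + min (L − natDegree A) (L − natDegree B)` be the
extended degree of the GCD. Then `S_D(A,B) = sylv L d A B` has rank `2L − D + 1 − K`
(left kernel of dimension `K`), and a vector `u` lies in the left kernel iff the padded
coefficient vector `h` of the GCD, `h[k] = (gcd A B).coeff k` for `0 ≤ k ≤ K`, satisfies
`hᵀ · Hank_{K+1}(u) = 0`, where `Hank_{K+1}(u)[i,j] = u[i+j]`. -/
theorem sylvester_extended_left_kernel (L : ℕ) (hL : 1 ≤ L)
    (A B : Polynomial ℂ) (hA : A ≠ 0) (hB : B ≠ 0)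
    (hdA : A.natDegree ≤ L) (hdB : B.natDegree ≤ L)
    (D : ℤ) (hD : D ≤ 1) (d : ℕ) (hd : (d : ℤ) = (L : ℤ) - D)
    (K : ℕ)
    (hK : K = (EuclideanDomain.gcd A B).natDegree
        + min (L - A.natDegree) (L - B.natDegree)) :
    (sylv L d A B).rank = L + d + 1 - K
    ∧ ∀ u : Fin (L + d + 1) → ℂ,
        (u ᵥ* sylv L d A B = 0 ↔
          (fun k : Fin (K + 1) => (EuclideanDomain.gcd A B).coeff (k : ℕ)) ᵥ*
            (Matrix.of fun (i : Fin (K + 1)) (j : Fin (L + d + 1 - K)) =>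
              u ⟨(i : ℕ) + (j : ℕ), by have hi := i.isLt; have hj := j.isLt; omega⟩)
          = 0) := by
  rw [rank_sylv]
  simp_rw [vecMul_sylv_eq_zero_iff]
  exact sylvester_extended_left_kernel_general L A B (Or.inl hA) hdA hdB d K hK (by omega)
end

section
/- Let N ≥ 1. The set of pairs of signals (u, v) ∈ (Fin N → ℂ) × (Fin N → ℂ) whose generating polynomials U and V have at least one common root in ℂ (i.e., there exists α ∈ ℂ with U(α) = 0 and V(α) = 0) has Lebesgue measure zero with respect to the product volume measure on (Fin N → ℂ) × (Fin N → ℂ). -/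
open Polynomial MeasureTheory

/-- The generating polynomial of a signal `x : Fin N → ℂ`:
`X(z) = ∑_{n=0}^{N−1} x[n]·zⁿ`. -/
noncomputable def genPoly (N : ℕ) (x : Fin N → ℂ) : Polynomial ℂ :=
  ∑ n : Fin N, Polynomial.C (x n) * Polynomial.X ^ (n : ℕ)

/-!
The pairs with a common root form the projection of a closed set along the σ-compact factor `ℂ`, so
they form a measurable set and, by Fubini, it suffices that for almost every `u` the set of `v`
whose polynomial shares a root with that of `u` is null. For `u ≠ 0` this set is the union, over the
finitely many roots `α` of `U`, of the kernels of the evaluations `v ↦ V(α)`. Each kernel is null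
because its translates, the fibres of the evaluation, form an uncountable disjoint family of sets of
equal measure.
-/

theorem measurableSet_exists_of_isClosed {X Y : Type*} [TopologicalSpace X]
    [MeasurableSpace X] [OpensMeasurableSpace X] [TopologicalSpace Y] [SigmaCompactSpace Y]
    {s : Set (X × Y)} (hs : IsClosed s) : MeasurableSet {x | ∃ y, (x, y) ∈ s} := by
  let slab (n : ℕ) : Set (X × compactCovering Y n) := Prod.map id Subtype.val ⁻¹' s
  have isClosed_image_slab (n : ℕ) : IsClosed (Prod.fst '' slab n) := by
    have : CompactSpace (compactCovering Y n) :=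
      isCompact_iff_compactSpace.mp (isCompact_compactCovering Y n)
    exact isClosedMap_fst_of_compactSpace _ (hs.preimage (by fun_prop))
  have eq_iUnion : {x | ∃ y, (x, y) ∈ s} = ⋃ n, Prod.fst '' slab n := by
    ext x
    simp only [Set.mem_ofPred_eq, Set.mem_iUnion, Set.mem_image, Prod.exists, exists_and_right,
      exists_eq_right]
    constructor
    · rintro ⟨y, hy⟩
      obtain ⟨n, hn⟩ := exists_mem_compactCovering y
      exact ⟨n, ⟨y, hn⟩, hy⟩
    · rintro ⟨n, y, hy⟩
      exact ⟨y, hy⟩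
  rw [eq_iUnion]
  exact .iUnion fun n ↦ (isClosed_image_slab n).measurableSet

theorem measure_fiber_eq_zero_of_surjective {G A : Type*} [AddGroup G] [MeasurableSpace G]
    [MeasurableAdd G] [AddGroup A] [MeasurableSpace A] [MeasurableSingletonClass A] [Uncountable A]
    (μ : Measure G) [SFinite μ] [μ.IsAddLeftInvariant] {f : G →+ A} (hf : Measurable f)
    (hsurj : Function.Surjective f) (a : A) : μ (f ⁻¹' {a}) = 0 := by
  have measure_fiber_eq (b : A) : μ (f ⁻¹' {b}) = μ (f ⁻¹' {a}) := by
    obtain ⟨g, hg⟩ := hsurj (b - a)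
    have : (g + ·) ⁻¹' (f ⁻¹' {b}) = f ⁻¹' {a} := by
      ext x
      change f (g + x) = b ↔ f x = a
      rw [map_add, hg, ← eq_neg_add_iff_add_eq, neg_sub, sub_add_cancel]
    rw [← this, measure_preimage_add]
  have countable_pos : {b | 0 < μ (f ⁻¹' {b})}.Countable :=
    Measure.countable_meas_pos_of_disjoint_iUnion (fun b ↦ hf (measurableSet_singleton b))
      fun b c hbc ↦ Disjoint.preimage f (Set.disjoint_singleton.mpr hbc)
  by_contra hne
  refine Set.not_countable_univ (α := A) (countable_pos.mono fun b _ ↦ ?_)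
  simpa only [Set.mem_ofPred_eq, measure_fiber_eq b] using pos_iff_ne_zero.mpr hne

theorem eval_ofFn {R : Type*} [Semiring R] [DecidableEq R] {n : ℕ} (v : Fin n → R) (a : R) :
    (ofFn n v).eval a = ∑ i, v i * a ^ (i : ℕ) := by
  simp only [ofFn_eq_sum_monomial, eval_finsetSum, eval_monomial]

theorem continuous_eval_ofFn {R X : Type*} [Semiring R] [DecidableEq R] [TopologicalSpace R]
    [IsTopologicalSemiring R] [TopologicalSpace X] {n : ℕ} {v : X → Fin n → R} {a : X → R}
    (hv : Continuous v) (ha : Continuous a) : Continuous fun x ↦ (ofFn n (v x)).eval (a x) := by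
  simp only [eval_ofFn]
  fun_prop

theorem surjective_eval_ofFn {R : Type*} [Semiring R] [DecidableEq R] (n : ℕ) [NeZero n] (a : R) :
    Function.Surjective fun v : Fin n → R ↦ (ofFn n v).eval a :=
  fun c ↦ ⟨Pi.single 0 c, by simp [eval_ofFn, Pi.single_apply]⟩

theorem genPoly_eq_ofFn (N : ℕ) (x : Fin N → ℂ) : genPoly N x = ofFn N x := by
  simp only [genPoly, ofFn_eq_sum_monomial, C_mul_X_pow_eq_monomial]

section CommonRoot

variable {R : Type*} [CommRing R] [DecidableEq R] [TopologicalSpace R] [IsTopologicalRing R]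
  [T2Space R] [SecondCountableTopology R] [MeasurableSpace R] [BorelSpace R]

theorem measurableSet_common_root_pairs [SigmaCompactSpace R] (M N : ℕ) :
    MeasurableSet {p : (Fin M → R) × (Fin N → R) |
      ∃ α, (ofFn M p.1).eval α = 0 ∧ (ofFn N p.2).eval α = 0} := by
  have isClosed_left : IsClosed {q : ((Fin M → R) × (Fin N → R)) × R |
      (ofFn M q.1.1).eval q.2 = 0} :=
    isClosed_singleton.preimage (continuous_eval_ofFn (by fun_prop) continuous_snd)
  have isClosed_right : IsClosed {q : ((Fin M → R) × (Fin N → R)) × R |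
      (ofFn N q.1.2).eval q.2 = 0} :=
    isClosed_singleton.preimage (continuous_eval_ofFn (by fun_prop) continuous_snd)
  exact measurableSet_exists_of_isClosed (isClosed_left.inter isClosed_right)

variable [Uncountable R] {N : ℕ} [NeZero N] (ν : Measure (Fin N → R)) [SFinite ν]
  [ν.IsAddLeftInvariant]

theorem measure_isRoot_ofFn_eq_zero (α : R) : ν {v | (ofFn N v).eval α = 0} = 0 := by
  let evalAt : (Fin N → R) →+ R := ((leval α).comp (ofFn N)).toAddMonoidHom
  have continuous_evalAt : Continuous evalAt :=
    continuous_eval_ofFn continuous_id continuous_const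
  exact measure_fiber_eq_zero_of_surjective ν continuous_evalAt.measurable
    (surjective_eval_ofFn N α) 0

theorem measure_common_root_eq_zero [IsDomain R] {P : R[X]} (hP : P ≠ 0) :
    ν {v | ∃ α, P.eval α = 0 ∧ (ofFn N v).eval α = 0} = 0 := by
  have eq_biUnion : {v | ∃ α, P.eval α = 0 ∧ (ofFn N v).eval α = 0} =
      ⋃ α ∈ {α | IsRoot P α}, {v | (ofFn N v).eval α = 0} := by
    ext v
    simp only [Set.mem_ofPred_eq, Set.mem_iUnion, exists_prop, IsRoot.def]
  rw [eq_biUnion, measure_biUnion_null_iff (finite_setOfPred_isRoot hP).countable]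
  exact fun α _ ↦ measure_isRoot_ofFn_eq_zero ν α

theorem measure_common_root_pairs_eq_zero_general [IsDomain R] [SigmaCompactSpace R] {M : ℕ}
    (μ : Measure (Fin M → R)) [NullSingletonClass μ] :
    μ.prod ν {p | ∃ α, (ofFn M p.1).eval α = 0 ∧ (ofFn N p.2).eval α = 0} = 0 := by
  refine Measure.measure_prod_null_of_ae_null (measurableSet_common_root_pairs M N) ?_
  filter_upwards [μ.ae_ne 0] with u hu
  have ofFn_ne_zero : ofFn M u ≠ 0 := (map_ne_zero_iff _ (injective_ofFn M)).mpr hu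
  exact measure_common_root_eq_zero ν ofFn_ne_zero

end CommonRoot

/-- almost everywhere uniqueness. The set of pairs of signals whose
generating polynomials have at least one common root in `ℂ` has Lebesgue measure zero
in `(Fin N → ℂ) × (Fin N → ℂ)`. -/
theorem measure_common_root_pairs_eq_zero (N : ℕ) (hN : 1 ≤ N) :
    volume {p : (Fin N → ℂ) × (Fin N → ℂ) |
        ∃ α : ℂ, (genPoly N p.1).eval α = 0 ∧ (genPoly N p.2).eval α = 0} = 0 := by
  have : NeZero N := .of_pos hN
  have : Uncountable ℂ := Complex.ofReal_injective.uncountable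
  simp only [genPoly_eq_ofFn, Measure.volume_eq_prod]
  exact measure_common_root_pairs_eq_zero_general (N := N) (R := ℂ) volume volume
end
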